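/- For all p ≥ 0 and κ ∈ [0,1], the inequality R1A(p,κ) ≥ R̄ holds if and only if p²·a12²·((γ2+1)·(1−κ²) − 1) − 2·p·a12·(P1 − γ2) + γ2 + 1 − (1+P1)² ≤ 0. -/

import Mathlib

/-- For all `p ≥ 0` and `κ ∈ [0,1]`, the rate constraint
`R1A(p,κ) ≥ R̄` (user 1's rate when its own circularity coefficient is < 1)
holds iff the quadratic inequality
`p²·a12²·((γ2+1)·(1−κ²) − 1) − 2·p·a12·(P1 − γ2) + γ2 + 1 − (1+P1)² ≤ 0` holds. -/
theorem stmt3 (P1 P2 a12 α Rbar γ1 γ2 : ℝ)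
    (hP1 : 0 < P1) (hP2 : 0 < P2) (ha12 : 0 < a12) (hα : α ∈ Set.Ioo (0:ℝ) 1)
    (hRbar : Rbar = α * Real.logb 2 (1 + P1))
    (hγ1 : γ1 = (1 + P1) ^ α - 1) (hγ2 : γ2 = (1 + P1) ^ (2 * α) - 1) :
    ∀ p κ : ℝ, 0 ≤ p → κ ∈ Set.Icc (0:ℝ) 1 →
      ((1 / 2) * Real.logb 2
          ((p * a12 + P1 + 1) ^ 2
              / (1 + p * a12 * (p * a12 * (1 - κ ^ 2) + 2))) ≥ Rbar
        ↔ p ^ 2 * a12 ^ 2 * ((γ2 + 1) * (1 - κ ^ 2) - 1)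
            - 2 * p * a12 * (P1 - γ2) + γ2 + 1 - (1 + P1) ^ 2 ≤ 0) := by
  intro p κ hp hκ
  obtain ⟨hκ0, hκ1⟩ := hκ
  have hx : 0 ≤ p * a12 := mul_nonneg hp ha12.le
  have hk : 0 ≤ 1 - κ ^ 2 := by nlinarith
  have hD : 0 < 1 + p * a12 * (p * a12 * (1 - κ ^ 2) + 2) := by positivity
  have hN : 0 < (p * a12 + P1 + 1) ^ 2 := by positivity
  have hQ : 0 < (p * a12 + P1 + 1) ^ 2 / (1 + p * a12 * (p * a12 * (1 - κ ^ 2) + 2)) :=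
    div_pos hN hD
  have hB : (0:ℝ) < 1 + P1 := by linarith
  have hG : 0 < (1 + P1) ^ (2 * α) := Real.rpow_pos_of_pos hB _
  have hg : γ2 + 1 = (1 + P1) ^ (2 * α) := by rw [hγ2]; ring
  have hlog : Real.logb 2 (γ2 + 1) = 2 * Rbar := by
    rw [hg, Real.logb_rpow_eq_mul_logb_of_pos hB, hRbar]; ring
  have hG' : 0 < γ2 + 1 := hg ▸ hG
  have key := Real.logb_le_logb (b := 2) (by norm_num) hG' hQ
  rw [hlog, le_div_iff₀ hD] at key
  constructor
  · intro h
    have := key.1 (by linarith)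
    nlinarith
  · intro h
    have := key.2 (by nlinarith)
    linarith
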